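/- Let λ > 0, let x ∈ ℝ³ and r > 0, and let φ be a smooth real-valued function defined on an open neighborhood of the closed ball B(x, r) ⊂ ℝ³ satisfying Δφ = −λφ there. If φ(x) = 0, then ∫_{‖x−y‖ ≤ r} φ(y)/‖y−x‖ dy = 0; that is, the positive and negative mass of φ around one of its roots is perfectly balanced when integrated against the Coulomb kernel. -/

import Mathlib

open scoped Real
open MeasureTheory

/-- The Euclidean Laplacian `Δf(x) = Σᵢ ∂²f/∂xᵢ²(x)` of `f : ℝ^d → ℝ`. -/
noncomputable def euclidLaplacian {d : ℕ} (f : EuclideanSpace ℝ (Fin d) → ℝ)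
    (x : EuclideanSpace ℝ (Fin d)) : ℝ :=
  ∑ i, fderiv ℝ (fun y => fderiv ℝ f y (EuclideanSpace.single i 1)) x (EuclideanSpace.single i 1)

/-!
Let `u t` be the integral of `φ` over the sphere of radius `t` about the root. Invariance of the
sphere under the rotations `exp (s • A)`, `A` skew-adjoint, makes the integral of `Df(w)(A w)` over
it vanish for every `C¹` function `f`; applying this to `f y = ⟪e i, y⟫ * ∂ⱼφ y`, with `A` the
rotation generator in the plane of `e i` and `e j`, and summing over `i` and `j` yields Darboux's
equation `t * u'' + (d - 1) * u' = t * ∫ Δφ = -λ * t * u`. Here `u 0 = u' 0 = 0`, and the damping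
term has the sign that lets Grönwall's inequality apply to the energy `u ^ 2 + u' ^ 2`, so `u = 0`.
Hence `φ` integrates to zero against every radial kernel.
-/

open Set Topology Metric InnerProductSpace Module
open scoped RealInnerProductSpace Laplacian Pointwise

section ParametricIntegral

variable {X F : Type*} [TopologicalSpace X] [CompactSpace X] [MeasurableSpace X]
  [OpensMeasurableSpace X] [NormedAddCommGroup F] {μ : Measure X} [IsFiniteMeasure μ]

lemma integrable_of_continuous_compactSpace {g : X → F} (hg : Continuous g) : Integrable g μ :=
  hg.integrable_of_hasCompactSupport (.of_compactSpace g)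

lemma hasDerivAt_integral_of_continuous_deriv [NormedSpace ℝ F]
    [SecondCountableTopologyEither X F] {g g' : ℝ → X → F}
    (hg : ∀ t, Continuous (g t)) (hg' : Continuous ↿g')
    (hderiv : ∀ t w, HasDerivAt (g · w) (g' t w) t) (t : ℝ) :
    HasDerivAt (fun t => ∫ w, g t w ∂μ) (∫ w, g' t w ∂μ) t := by
  obtain ⟨C, hC⟩ := ((isCompact_closedBall t 1).prod
    (isCompact_univ (X := X))).exists_bound_of_continuousOn hg'.continuousOn
  exact (hasDerivAt_integral_of_dominated_loc_of_deriv_le (bound := fun _ => C)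
    (closedBall_mem_nhds t one_pos)
    (.of_forall fun s => (hg s).aestronglyMeasurable)
    (integrable_of_continuous_compactSpace (hg t))
    (hg'.comp (.prodMk_right t)).aestronglyMeasurable
    (.of_forall fun w s hs => hC (s, w) ⟨hs, mem_univ w⟩)
    (integrable_const C)
    (.of_forall fun w s _ => hderiv s w)).2

end ParametricIntegral

section AffineLine

variable {E F : Type*} [NormedAddCommGroup E] [NormedSpace ℝ E] [NormedAddCommGroup F]
  [NormedSpace ℝ F]

lemma hasDerivAt_comp_add_smul {f : E → F} {f' : E →L[ℝ] F} {x w : E} {t : ℝ}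
    (hf : HasFDerivAt f f' (x + t • w)) : HasDerivAt (fun t : ℝ => f (x + t • w)) (f' w) t :=
  hf.comp_hasDerivAt t (by simpa using ((hasDerivAt_id t).smul_const w).const_add x)

lemma fderiv_comp_add_smul (f : E → F) (x : E) (t : ℝ) :
    fderiv ℝ (fun y => f (x + t • y)) = fun y => t • fderiv ℝ f (x + t • y) := by
  ext1 y
  rw [fderiv_comp_smul (f := fun z => f (x + z)), fderiv_comp_add_left]

lemma fderiv_fderiv_comp_add_smul (f : E → F) (x y : E) (t : ℝ) :
    fderiv ℝ (fderiv ℝ fun y => f (x + t • y)) y = t ^ 2 • fderiv ℝ (fderiv ℝ f) (x + t • y) := by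
  rw [fderiv_comp_add_smul]
  calc fderiv ℝ (fun y => t • fderiv ℝ f (x + t • y)) y
    _ = t • fderiv ℝ (fun y => fderiv ℝ f (x + t • y)) y :=
      congrFun (fderiv_const_smul_field (f := fun y => fderiv ℝ f (x + t • y)) t) y
    _ = t ^ 2 • fderiv ℝ (fderiv ℝ f) (x + t • y) := by rw [fderiv_comp_add_smul, smul_smul, sq]

end AffineLine

section SmoothExtension

variable {E F : Type*} [NormedAddCommGroup E] [NormedSpace ℝ E] [FiniteDimensional ℝ E]
  [NormedAddCommGroup F] [NormedSpace ℝ F]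

lemma exists_contDiff_eventuallyEq {n : ℕ∞} {f : E → F} {K U : Set E} (hK : IsClosed K)
    (hU : IsOpen U) (hKU : K ⊆ U) (hf : ContDiffOn ℝ n f U) :
    ∃ g : E → F, ContDiff ℝ n g ∧ ∀ y ∈ K, g =ᶠ[𝓝 y] f := by
  obtain ⟨χ, hχU, hχK, -⟩ := exists_contMDiffMap_zero_one_nhds_of_isClosed (n := n)
    (modelWithCornersSelf ℝ E) hU.isClosed_compl hK (disjoint_compl_left_iff_subset.mpr hKU)
  rw [eventually_nhdsSet_iff_forall] at hχU hχK
  refine ⟨fun y => χ y • f y, contDiff_iff_contDiffAt.mpr fun y => ?_, fun y hy => ?_⟩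
  · by_cases hy : y ∈ U
    · exact χ.contMDiff.contDiff.contDiffAt.smul (hf.contDiffAt (hU.mem_nhds hy))
    · exact (contDiffAt_const (c := (0 : F))).congr_of_eventuallyEq
        ((hχU y hy).mono fun z hz => by simp only [hz, zero_smul])
  · exact (hχK y hy).mono fun z hz => by simp only [hz, one_smul]

end SmoothExtension

section PolarCoordinates

variable {E F : Type*} [NormedAddCommGroup E] [NormedSpace ℝ E] [MeasurableSpace E] [BorelSpace E]
  [NormedAddCommGroup F] [NormedSpace ℝ F] {μ : Measure E}

/-- The action of a linear isometry on the unit sphere. -/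
def sphereIsometry (R : E ≃ₗᵢ[ℝ] E) : sphere (0 : E) 1 ≃ₜ sphere (0 : E) 1 :=
  R.toHomeomorph.subtype fun y => by simp

lemma measurePreserving_sphereIsometry {R : E ≃ₗᵢ[ℝ] E} (hR : MeasurePreserving R μ μ) :
    MeasurePreserving (sphereIsometry R) μ.toSphere μ.toSphere := by
  refine ⟨(sphereIsometry R).measurable, Measure.ext fun s hs => ?_⟩
  have hcone : Ioo (0 : ℝ) 1 • ((↑) '' (sphereIsometry R ⁻¹' s) : Set E) =
      R ⁻¹' (Ioo (0 : ℝ) 1 • ((↑) '' s)) :=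
    calc
      _ = Ioo (0 : ℝ) 1 • (R.symm '' ((↑) '' s)) := by
        rw [← (sphereIsometry R).image_symm, image_image, image_image]
        rfl
      _ = R.symm '' (Ioo (0 : ℝ) 1 • ((↑) '' s)) :=
        (image_image2_distrib_right fun t y => R.symm.map_smul t y).symm
      _ = _ := R.toEquiv.image_symm_eq_preimage _
  rw [Measure.map_apply (sphereIsometry R).measurable hs,
    μ.toSphere_apply' ((sphereIsometry R).measurable hs), μ.toSphere_apply' hs, hcone,
    hR.measure_preimage_emb R.toHomeomorph.measurableEmbedding]

lemma integral_toSphere_comp_isometry {R : E ≃ₗᵢ[ℝ] E} (hR : MeasurePreserving R μ μ) (f : E → F) :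
    ∫ w : sphere (0 : E) 1, f (R w) ∂μ.toSphere = ∫ w : sphere (0 : E) 1, f w ∂μ.toSphere :=
  (measurePreserving_sphereIsometry hR).integral_comp (sphereIsometry R).measurableEmbedding
    fun w => f w

lemma integral_toSphere_continuousLinearMap [μ.IsNegInvariant] (L : E →L[ℝ] F) :
    ∫ w : sphere (0 : E) 1, L w ∂μ.toSphere = 0 := by
  have hneg := integral_toSphere_comp_isometry (R := .neg ℝ) (Measure.measurePreserving_neg μ) L
  simp only [LinearIsometryEquiv.coe_neg, map_neg, integral_neg] at hneg
  have : IsAddTorsionFree F := .of_isTorsionFree ℝ F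
  exact self_eq_neg.mp hneg.symm

lemma integral_eq_integral_polar [FiniteDimensional ℝ E] [Nontrivial E] [μ.IsAddHaarMeasure]
    (g : E → F) :
    ∫ y, g y ∂μ = ∫ p : sphere (0 : E) 1 × Ioi (0 : ℝ), g (p.2.1 • p.1.1)
      ∂μ.toSphere.prod (.volumeIoiPow (finrank ℝ E - 1)) := by
  rw [← μ.measurePreserving_homeomorphUnitSphereProd.integral_comp
    (Homeomorph.measurableEmbedding _) fun p => g (p.2.1 • p.1.1)]
  have hpolar (y : ({0}ᶜ : Set E)) :
      (homeomorphUnitSphereProd E y).2.1 • (homeomorphUnitSphereProd E y).1.1 = y :=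
    congrArg Subtype.val ((homeomorphUnitSphereProd E).symm_apply_apply y)
  simp only [hpolar]
  rw [integral_subtype_comap (measurableSet_singleton _).compl g, restrict_compl_singleton]

lemma integral_eq_zero_of_forall_toSphere [FiniteDimensional ℝ E] [Nontrivial E]
    [μ.IsAddHaarMeasure] {g : E → F}
    (hg : ∀ s : ℝ, 0 < s → ∫ w : sphere (0 : E) 1, g (s • w) ∂μ.toSphere = 0) :
    ∫ y, g y ∂μ = 0 := by
  rw [integral_eq_integral_polar]
  by_cases hint : Integrable (fun p : sphere (0 : E) 1 × Ioi (0 : ℝ) => g (p.2.1 • p.1.1))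
      (μ.toSphere.prod (.volumeIoiPow (finrank ℝ E - 1)))
  · rw [integral_prod_symm _ hint]
    exact integral_eq_zero_of_ae (.of_forall fun s => hg s s.2)
  · exact integral_undef hint

end PolarCoordinates

section Rotations

variable {E F : Type*} [NormedAddCommGroup E] [InnerProductSpace ℝ E] [NormedAddCommGroup F]
  [NormedSpace ℝ F]

/-- The generator of the rotations in the oriented plane spanned by `u` and `v`, mapping `u` to `v`
and `v` to `-u` when these are orthonormal. -/
noncomputable def planeRotationGenerator (u v : E) : E →L[ℝ] E :=
  rankOne ℝ v u - rankOne ℝ u v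

lemma planeRotationGenerator_apply (u v z : E) :
    planeRotationGenerator u v z = ⟪u, z⟫ • v - ⟪v, z⟫ • u := rfl

lemma sum_planeRotationGenerator {ι : Type*} [Fintype ι] (b : OrthonormalBasis ι ℝ E)
    (B : E →L[ℝ] E →L[ℝ] F) (L : E →L[ℝ] F) (z : E) :
    ∑ i, ∑ j, (⟪b i, z⟫ • B (planeRotationGenerator (b i) (b j) z) (b j) +
        ⟪b i, planeRotationGenerator (b i) (b j) z⟫ • L (b j)) =
      ‖z‖ ^ 2 • ∑ j, B (b j) (b j) - B z z - (finrank ℝ E - 1 : ℝ) • L z := by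
  classical
  have hnorm : ∑ i, ∑ j, ⟪b i, z⟫ ^ 2 • B (b j) (b j) = ‖z‖ ^ 2 • ∑ j, B (b j) (b j) := by
    simp only [← Finset.smul_sum, ← Finset.sum_smul, b.sum_sq_inner_right]
  have hL (L : E →L[ℝ] F) : ∑ j, ⟪b j, z⟫ • L (b j) = L z := by
    simp only [← map_smul, ← map_sum, b.sum_repr']
  have hB : ∑ i, ∑ j, (⟪b i, z⟫ * ⟪b j, z⟫) • B (b i) (b j) = B z z := by
    simp only [mul_smul, ← Finset.smul_sum, hL]
    exact hL (B.flip z)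
  have hfin : (finrank ℝ E : ℝ) = Fintype.card ι := by rw [finrank_eq_card_basis b.toBasis]
  simp only [planeRotationGenerator_apply, map_sub, map_smul, sub_apply,
    smul_apply, inner_sub_right, inner_smul_right, b.inner_eq_ite]
  simp only [smul_sub, sub_smul, smul_smul, Finset.sum_add_distrib, Finset.sum_sub_distrib, ← sq,
    hnorm, hB]
  simp only [mul_ite, mul_one, mul_zero, ite_smul, zero_smul, Finset.sum_ite_eq, Finset.mem_univ,
    if_true, Finset.sum_const, Finset.card_univ, hL, hfin, one_smul, Nat.cast_smul_eq_nsmul]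
  abel

variable [CompleteSpace E]

lemma planeRotationGenerator_mem_skewAdjoint (u v : E) :
    planeRotationGenerator u v ∈ skewAdjoint (E →L[ℝ] E) := by
  simp [skewAdjoint.mem_iff, planeRotationGenerator, ContinuousLinearMap.star_eq_adjoint]

/-- The one-parameter group of rotations `exp (t • A)` generated by `A`. -/
noncomputable def rotationFlow (A : skewAdjoint (E →L[ℝ] E)) (t : ℝ) : E ≃ₗᵢ[ℝ] E :=
  letI : NormedAlgebra ℚ (E →L[ℝ] E) := .restrictScalars ℚ ℝ _
  Unitary.linearIsometryEquiv ⟨NormedSpace.exp (t • A.1),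
    NormedSpace.exp_mem_unitary_of_mem_skewAdjoint (skewAdjoint.smul_mem t A.2)⟩

lemma rotationFlow_apply (A : skewAdjoint (E →L[ℝ] E)) (t : ℝ) (y : E) :
    rotationFlow A t y = NormedSpace.exp (t • A.1) y := rfl

lemma continuous_rotationFlow (A : skewAdjoint (E →L[ℝ] E)) :
    Continuous fun p : ℝ × E => rotationFlow A p.1 p.2 := by
  let : NormedAlgebra ℚ (E →L[ℝ] E) := .restrictScalars ℚ ℝ _
  simp only [rotationFlow_apply]
  have : Continuous (NormedSpace.exp : (E →L[ℝ] E) → E →L[ℝ] E) := NormedSpace.exp_continuous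
  fun_prop

lemma hasDerivAt_rotationFlow (A : skewAdjoint (E →L[ℝ] E)) (t : ℝ) (y : E) :
    HasDerivAt (fun t => rotationFlow A t y) (A.1 (rotationFlow A t y)) t := by
  simpa [rotationFlow_apply] using
    (hasDerivAt_exp_smul_const' A.1 t).clm_apply (hasDerivAt_const t y)

end Rotations

section SphericalIntegral

variable {E F : Type*} [NormedAddCommGroup E] [InnerProductSpace ℝ E] [FiniteDimensional ℝ E]
  [NormedAddCommGroup F] [NormedSpace ℝ F]

lemma laplacian_eq_sum_fderiv_fderiv {ι : Type*} [Fintype ι] (b : OrthonormalBasis ι ℝ E)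
    (f : E → F) (y : E) : Δ f y = ∑ i, fderiv ℝ (fderiv ℝ f) y (b i) (b i) := by
  simp only [laplacian_eq_iteratedFDeriv_orthonormalBasis f b, iteratedFDeriv_two_apply,
    Matrix.cons_val_zero, Matrix.cons_val_one]

lemma laplacian_comp_add_smul (f : E → F) (x y : E) (t : ℝ) :
    Δ (fun y => f (x + t • y)) y = t ^ 2 • Δ f (x + t • y) := by
  simp only [laplacian_eq_sum_fderiv_fderiv (stdOrthonormalBasis ℝ E), fderiv_fderiv_comp_add_smul,
    smul_apply, Finset.smul_sum]

variable [MeasurableSpace E] [BorelSpace E]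

lemma integral_toSphere_fderiv_skewAdjoint {f : E → F} (hf : ContDiff ℝ 1 f)
    {A : E →L[ℝ] E} (hA : A ∈ skewAdjoint (E →L[ℝ] E)) :
    ∫ w : sphere (0 : E) 1, fderiv ℝ f w (A w) ∂volume.toSphere = 0 := by
  let R := rotationFlow ⟨A, hA⟩
  have hR : Continuous fun p : ℝ × E => R p.1 p.2 := continuous_rotationFlow ⟨A, hA⟩
  have : Continuous f := hf.continuous
  have : Continuous (fderiv ℝ f) := hf.continuous_fderiv one_ne_zero
  have hderiv := hasDerivAt_integral_of_continuous_deriv (μ := (volume : Measure E).toSphere)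
    (g := fun t w => f (R t w)) (g' := fun t w => fderiv ℝ f (R t w) (A (R t w)))
    (by fun_prop) (by fun_prop)
    (fun t w => (hf.differentiable one_ne_zero _).hasFDerivAt.comp_hasDerivAt t
      (hasDerivAt_rotationFlow ⟨A, hA⟩ t w)) 0
  simp only [integral_toSphere_comp_isometry (LinearIsometryEquiv.measurePreserving _) f] at hderiv
  simpa [R, rotationFlow_apply] using hderiv.unique (hasDerivAt_const 0 _)

lemma integral_toSphere_fderiv_fderiv_skewAdjoint {f : E → F} (hf : ContDiff ℝ 2 f)
    {A : E →L[ℝ] E} (hA : A ∈ skewAdjoint (E →L[ℝ] E)) (u v : E) :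
    ∫ w : sphere (0 : E) 1, (⟪u, w⟫ • fderiv ℝ (fderiv ℝ f) w (A w) v +
      ⟪u, A w⟫ • fderiv ℝ f w v) ∂volume.toSphere = 0 := by
  have hf' : ContDiff ℝ 1 (fderiv ℝ f) := hf.fderiv_right one_add_one_eq_two.le
  have hderiv (y : E) : HasFDerivAt (fun y => ⟪u, y⟫ • fderiv ℝ f y v)
      (⟪u, y⟫ • (fderiv ℝ (fderiv ℝ f) y).flip v + (innerSL ℝ u).smulRight (fderiv ℝ f y v)) y := by
    simpa using (innerSL ℝ u).hasFDerivAt.fun_smul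
      ((hf'.differentiable one_ne_zero y).hasFDerivAt.clm_apply (hasFDerivAt_const v y))
  have hsmooth : ContDiff ℝ 1 fun y => ⟪u, y⟫ • fderiv ℝ f y v :=
    (innerSL ℝ u).contDiff.smul (hf'.clm_apply contDiff_const)
  simpa [(hderiv _).fderiv] using integral_toSphere_fderiv_skewAdjoint hsmooth hA

lemma integral_toSphere_laplacian {f : E → F} (hf : ContDiff ℝ 2 f) :
    ∫ w : sphere (0 : E) 1, Δ f w ∂volume.toSphere =
      ∫ w : sphere (0 : E) 1, fderiv ℝ (fderiv ℝ f) w w w ∂volume.toSphere +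
        (finrank ℝ E - 1 : ℝ) • ∫ w : sphere (0 : E) 1, fderiv ℝ f w w ∂volume.toSphere := by
  let b := stdOrthonormalBasis ℝ E
  let A (i j) := planeRotationGenerator (b i) (b j)
  have hf' : ContDiff ℝ 1 (fderiv ℝ f) := hf.fderiv_right one_add_one_eq_two.le
  have : Continuous (fderiv ℝ f) := hf'.continuous
  have : Continuous (fderiv ℝ (fderiv ℝ f)) := hf'.continuous_fderiv one_ne_zero
  let G (i j) (w : sphere (0 : E) 1) : F :=
    ⟪b i, w⟫ • fderiv ℝ (fderiv ℝ f) w (A i j w) (b j) + ⟪b i, A i j w⟫ • fderiv ℝ f w (b j)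
  have hint (i j) : Integrable (G i j) volume.toSphere :=
    integrable_of_continuous_compactSpace (by fun_prop)
  have hsum : ∫ w : sphere (0 : E) 1, (Δ f w - fderiv ℝ (fderiv ℝ f) w w w -
      (finrank ℝ E - 1 : ℝ) • fderiv ℝ f w w) ∂volume.toSphere = 0 := by
    calc
      _ = ∫ w, ∑ i, ∑ j, G i j w ∂volume.toSphere := by
        simp only [G, A, sum_planeRotationGenerator, norm_eq_of_mem_sphere, one_pow, one_smul,
          laplacian_eq_sum_fderiv_fderiv b]
      _ = ∑ i, ∑ j, ∫ w, G i j w ∂volume.toSphere := by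
        rw [integral_finsetSum _ fun i _ => integrable_finsetSum _ fun j _ => hint i j]
        simp only [integral_finsetSum _ fun j _ => hint _ j]
      _ = 0 := Finset.sum_eq_zero fun i _ => Finset.sum_eq_zero fun j _ =>
        integral_toSphere_fderiv_fderiv_skewAdjoint hf
          (planeRotationGenerator_mem_skewAdjoint (b i) (b j)) (b i) (b j)
  have hΔ : Continuous (Δ f) := by
    rw [funext (laplacian_eq_sum_fderiv_fderiv b f)]
    fun_prop
  rw [integral_sub, integral_sub, integral_smul] at hsum
  · rw [← sub_eq_zero, ← hsum]
    abel
  all_goals exact integrable_of_continuous_compactSpace (by fun_prop)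

/-- The integral of `f` over the sphere of centre `x` and radius `t`, pulled back to the unit
sphere: the spherical mean of `f`, up to the constant total mass of the unit sphere. -/
noncomputable def sphericalIntegral (f : E → F) (x : E) (t : ℝ) : F :=
  ∫ w : sphere (0 : E) 1, f (x + t • w) ∂volume.toSphere

lemma hasDerivAt_sphericalIntegral {f : E → F} (hf : ContDiff ℝ 1 f) (x : E) (t : ℝ) :
    HasDerivAt (sphericalIntegral f x)
      (∫ w : sphere (0 : E) 1, fderiv ℝ f (x + t • w) w ∂volume.toSphere) t := by
  have : Continuous f := hf.continuous
  have : Continuous (fderiv ℝ f) := hf.continuous_fderiv one_ne_zero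
  exact hasDerivAt_integral_of_continuous_deriv
    (g := fun t (w : sphere (0 : E) 1) => f (x + t • w))
    (g' := fun t w => fderiv ℝ f (x + t • w) w) (by fun_prop) (by fun_prop)
    (fun t w => hasDerivAt_comp_add_smul (hf.differentiable one_ne_zero _).hasFDerivAt) t

lemma hasDerivAt_integral_toSphere_fderiv {f : E → F} (hf : ContDiff ℝ 2 f) (x : E) (t : ℝ) :
    HasDerivAt (fun t : ℝ => ∫ w : sphere (0 : E) 1, fderiv ℝ f (x + t • w) w ∂volume.toSphere)
      (∫ w : sphere (0 : E) 1, fderiv ℝ (fderiv ℝ f) (x + t • w) w w ∂volume.toSphere) t := by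
  have hf' : ContDiff ℝ 1 (fderiv ℝ f) := hf.fderiv_right one_add_one_eq_two.le
  have : Continuous (fderiv ℝ f) := hf'.continuous
  have : Continuous (fderiv ℝ (fderiv ℝ f)) := hf'.continuous_fderiv one_ne_zero
  refine hasDerivAt_integral_of_continuous_deriv
    (g := fun t (w : sphere (0 : E) 1) => fderiv ℝ f (x + t • w) w)
    (g' := fun t w => fderiv ℝ (fderiv ℝ f) (x + t • w) w w) (by fun_prop) (by fun_prop)
    (fun t w => ?_) t
  have hline := hasDerivAt_comp_add_smul (x := x) (w := (w : E)) (t := t)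
    (hf'.differentiable one_ne_zero _).hasFDerivAt
  simpa using hline.clm_apply (hasDerivAt_const t (w : E))

-- The Darboux equation is usually divided by `t ^ 2`; this form also holds at `t = 0`.
lemma sphericalIntegral_darboux {f : E → F} (hf : ContDiff ℝ 2 f) (x : E) (t : ℝ) :
    t ^ 2 • ∫ w : sphere (0 : E) 1, fderiv ℝ (fderiv ℝ f) (x + t • w) w w ∂volume.toSphere +
        (finrank ℝ E - 1 : ℝ) •
          t • ∫ w : sphere (0 : E) 1, fderiv ℝ f (x + t • w) w ∂volume.toSphere =
      t ^ 2 • sphericalIntegral (Δ f) x t := by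
  have hsphere := integral_toSphere_laplacian (f := fun y => f (x + t • y)) (by fun_prop)
  simp only [laplacian_comp_add_smul, fderiv_fderiv_comp_add_smul] at hsphere
  simp only [fderiv_comp_add_smul, smul_apply, integral_smul] at hsphere
  exact hsphere.symm

lemma setIntegral_closedBall_radial_smul_eq_zero [Nontrivial E] {f : E → F} {x : E} {r : ℝ}
    (k : ℝ → ℝ) (hf : EqOn (sphericalIntegral f x) 0 (Icc 0 r)) :
    ∫ y in closedBall x r, k ‖y - x‖ • f y = 0 := by
  rw [← integral_indicator measurableSet_closedBall, ← integral_add_left_eq_self _ x]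
  refine integral_eq_zero_of_forall_toSphere fun s hs => ?_
  by_cases hsr : s ≤ r
  · have hmem (w : sphere (0 : E) 1) : x + s • w.1 ∈ closedBall x r := by
      simpa [norm_smul, abs_of_pos hs] using hsr
    simp only [indicator_of_mem (hmem _), add_sub_cancel_left, norm_smul, norm_eq_of_mem_sphere,
      integral_smul]
    exact smul_eq_zero_of_right _ (hf ⟨hs.le, hsr⟩)
  · have hmem (w : sphere (0 : E) 1) : x + s • w.1 ∉ closedBall x r := by
      simpa [norm_smul, abs_of_pos hs] using hsr
    simp only [indicator_of_notMem (hmem _), integral_zero]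

end SphericalIntegral

section RadialODE

variable {F : Type*} [NormedAddCommGroup F] [InnerProductSpace ℝ F]

lemma eqOn_zero_of_radial_ode {u u' u'' : ℝ → F} {c lam r : ℝ} (hc : 0 ≤ c)
    (hu : ∀ t, HasDerivAt u (u' t) t) (hu' : ∀ t, HasDerivAt u' (u'' t) t)
    (hode : ∀ t ∈ Ioo 0 r, t • u'' t + c • u' t = -(lam * t) • u t) (h0 : u 0 = 0)
    (h0' : u' 0 = 0) : EqOn u 0 (Icc 0 r) := by
  have hderiv (t : ℝ) : HasDerivAt (fun t => ‖u t‖ ^ 2 + ‖u' t‖ ^ 2)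
      (2 * ⟪u t, u' t⟫ + 2 * ⟪u' t, u'' t⟫) t := (hu t).norm_sq.add (hu' t).norm_sq
  have hdamp (t : ℝ) (ht : t ∈ Ico 0 r) : ⟪u' t, u'' t⟫ ≤ -lam * ⟪u t, u' t⟫ := by
    rcases ht.1.eq_or_lt with rfl | htpos
    · simp only [h0', inner_zero_left, inner_zero_right, mul_zero, le_refl]
    · have hinner := congrArg (⟪u' t, ·⟫) (hode t ⟨htpos, ht.2⟩)
      simp only [inner_add_right, inner_smul_right, real_inner_self_eq_norm_sq,
        real_inner_comm (u t)] at hinner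
      refine le_of_mul_le_mul_left ?_ htpos
      nlinarith [mul_nonneg hc (sq_nonneg ‖u' t‖)]
  have hgrowth (t : ℝ) (ht : t ∈ Ico 0 r) : 2 * ⟪u t, u' t⟫ + 2 * ⟪u' t, u'' t⟫ ≤
      |1 - lam| * (‖u t‖ ^ 2 + ‖u' t‖ ^ 2) + 0 := by
    calc 2 * ⟪u t, u' t⟫ + 2 * ⟪u' t, u'' t⟫ ≤ 2 * ((1 - lam) * ⟪u t, u' t⟫) := by
          linarith [hdamp t ht]
      _ ≤ 2 * (|1 - lam| * |⟪u t, u' t⟫|) := by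
        rw [← abs_mul]
        gcongr
        exact le_abs_self _
      _ ≤ 2 * (|1 - lam| * (‖u t‖ * ‖u' t‖)) := by
        gcongr
        exact abs_real_inner_le_norm _ _
      _ ≤ |1 - lam| * (‖u t‖ ^ 2 + ‖u' t‖ ^ 2) + 0 := by
        nlinarith [two_mul_le_add_sq ‖u t‖ ‖u' t‖, abs_nonneg (1 - lam)]
  intro t ht
  have henergy := le_gronwallBound_of_liminf_deriv_right_le (δ := 0)
    (fun t _ => (hderiv t).continuousAt.continuousWithinAt)
    (fun t _ _ hslope => (hderiv t).hasDerivWithinAt.liminf_right_slope_le hslope)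
    (by simp [h0, h0']) hgrowth t ht
  rw [gronwallBound_ε0_δ0] at henergy
  have hsq : ‖u t‖ ^ 2 = 0 := by linarith [sq_nonneg ‖u t‖, sq_nonneg ‖u' t‖]
  exact norm_eq_zero.mp (sq_eq_zero_iff.mp hsq)

end RadialODE

section Eigenfunctions

variable {E F : Type*} [NormedAddCommGroup E] [InnerProductSpace ℝ E] [FiniteDimensional ℝ E]
  [Nontrivial E] [MeasurableSpace E] [BorelSpace E] [NormedAddCommGroup F] [InnerProductSpace ℝ F]

lemma eqOn_sphericalIntegral_zero_of_laplacian_eq_smul {f : E → F} {lam r : ℝ} {x : E}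
    (hf : ContDiff ℝ 2 f) (heig : ∀ y ∈ ball x r, Δ f y = -lam • f y) (hroot : f x = 0) :
    EqOn (sphericalIntegral f x) 0 (Icc 0 r) := by
  have hmem {t : ℝ} (ht : t ∈ Ioo 0 r) (w : sphere (0 : E) 1) : x + t • w.1 ∈ ball x r := by
    simpa [norm_smul, abs_of_pos ht.1] using ht.2
  refine eqOn_zero_of_radial_ode (c := finrank ℝ E - 1) (lam := lam)
    (sub_nonneg.mpr (Nat.one_le_cast.mpr finrank_pos))
    (hasDerivAt_sphericalIntegral (hf.of_le one_le_two) x)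
    (hasDerivAt_integral_toSphere_fderiv hf x) (fun t ht => ?_) ?_ ?_
  · have heig_t : sphericalIntegral (Δ f) x t = -lam • sphericalIntegral f x t := by
      simp only [sphericalIntegral, heig _ (hmem ht _), integral_smul]
    refine smul_right_injective F ht.1.ne' ?_
    dsimp only
    rw [smul_add, smul_smul, ← sq, smul_comm t, sphericalIntegral_darboux hf, heig_t]
    module
  · simp only [sphericalIntegral, zero_smul, add_zero, hroot, integral_zero]
  · simpa using integral_toSphere_continuousLinearMap (fderiv ℝ f x)

theorem eigenfunction_coulomb_balance_at_root_general {φ : E → F} {U : Set E} {x : E} {r lam : ℝ}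
    (hr : 0 ≤ r) (hU : IsOpen U) (hBU : closedBall x r ⊆ U) (hφ : ContDiffOn ℝ 2 φ U)
    (heig : ∀ y ∈ ball x r, Δ φ y = -lam • φ y) (hroot : φ x = 0) :
    ∫ y in closedBall x r, ‖y - x‖⁻¹ • φ y = 0 := by
  obtain ⟨f, hf, hfφ⟩ := exists_contDiff_eventuallyEq isClosed_closedBall hU hBU hφ
  have hf_eq (y : E) (hy : y ∈ closedBall x r) : f y = φ y := (hfφ y hy).eq_of_nhds
  have hf_eig (y : E) (hy : y ∈ ball x r) : Δ f y = -lam • f y := by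
    have hyr := ball_subset_closedBall hy
    rw [(laplacian_congr_nhds (hfφ y hyr)).eq_of_nhds, hf_eq y hyr, heig y hy]
  have hf_root : f x = 0 := (hf_eq x (mem_closedBall_self hr)).trans hroot
  calc ∫ y in closedBall x r, ‖y - x‖⁻¹ • φ y = ∫ y in closedBall x r, ‖y - x‖⁻¹ • f y :=
        setIntegral_congr_fun measurableSet_closedBall fun y hy => by simp only [hf_eq y hy]
    _ = 0 := setIntegral_closedBall_radial_smul_eq_zero (·⁻¹)
        (eqOn_sphericalIntegral_zero_of_laplacian_eq_smul hf hf_eig hf_root)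

end Eigenfunctions

lemma euclidLaplacian_eq_laplacian {d : ℕ} {f : EuclideanSpace ℝ (Fin d) → ℝ}
    {x : EuclideanSpace ℝ (Fin d)} (hf : ContDiffAt ℝ 2 f x) : euclidLaplacian f x = Δ f x := by
  have hf' : DifferentiableAt ℝ (fderiv ℝ f) x :=
    (hf.fderiv_right one_add_one_eq_two.le).differentiableAt one_ne_zero
  simp [euclidLaplacian, laplacian_eq_sum_fderiv_fderiv (EuclideanSpace.basisFun (Fin d) ℝ),
    fderiv_clm_apply hf' (differentiableAt_const _)]

/-- If `−Δφ = λφ` on a neighborhood of the closed ball `B(x,r) ⊂ ℝ³` and `φ(x) = 0`,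
then the mass of `φ` around the root `x` is perfectly balanced against the Coulomb
kernel: `∫_{‖x−y‖ ≤ r} φ(y)/‖y−x‖ dy = 0`. -/
theorem eigenfunction_coulomb_balance_at_root (lam : ℝ) (hlam : 0 < lam)
    (x : EuclideanSpace ℝ (Fin 3)) (r : ℝ) (hr : 0 < r)
    (U : Set (EuclideanSpace ℝ (Fin 3))) (hU : IsOpen U) (hBU : Metric.closedBall x r ⊆ U)
    (φ : EuclideanSpace ℝ (Fin 3) → ℝ) (hφ : ContDiffOn ℝ (⊤ : ℕ∞) φ U)
    (heig : ∀ y ∈ U, euclidLaplacian φ y = -lam * φ y)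
    (hroot : φ x = 0) :
    ∫ y in Metric.closedBall x r, φ y / ‖y - x‖ = 0 := by
  have hφ₂ : ContDiffOn ℝ 2 φ U := hφ.of_le (by norm_cast)
  have hΔ (y) (hy : y ∈ ball x r) : Δ φ y = -lam • φ y := by
    have hyU := hBU (ball_subset_closedBall hy)
    rw [← euclidLaplacian_eq_laplacian (hφ₂.contDiffAt (hU.mem_nhds hyU)), heig y hyU, smul_eq_mul]
  simpa only [div_eq_inv_mul, smul_eq_mul] using
    eigenfunction_coulomb_balance_at_root_general hr.le hU hBU hφ₂ hΔ hroot
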